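/- arXiv:1406.5158 — 5 statements merged into one kernel-verified Lean document; each statement's English description precedes it below -/
import Mathlib

section
/- There exists a ℂ-linear bijection U : F → F^{⊗1} intertwining the two Heisenberg actions: U(h_n x) = h^A_n(U x) for all n ∈ ℤ and x ∈ F. (Thus, as modules for the Heisenberg algebra H_ℤ, the neutral fermion Fock space F^{⊗1/2} is isomorphic to the charged free fermion Fock space F^{⊗1}.) -/
noncomputable section

/-- The neutral fermion Fock space `F = F^{⊗1/2}`: the complex vector space with
basis `{e_S : S a finite subset of ℕ}`. -/
abbrev FockD : Type := Finset ℕ →₀ ℂ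

/-- Basis vector `e_S`. -/
def eD (S : Finset ℕ) : FockD := Finsupp.single S 1

/-- Action of the fermion mode `a_m` on the basis vector `e_S`. -/
def aVec (m : ℤ) (S : Finset ℕ) : FockD :=
  if 0 ≤ m then
    if m.toNat ∈ S then 0
    else ((-1 : ℂ) ^ (S.filter (fun s => m.toNat < s)).card) • eD (insert m.toNat S)
  else
    if (-m - 1).toNat ∈ S then
      ((-1 : ℂ) ^ (S.filter (fun s => (-m - 1).toNat < s)).card) • eD (S.erase ((-m - 1).toNat))
    else 0

/-- The fermion mode `a_m` as a linear operator on `F`. -/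
def aOp (m : ℤ) : FockD →ₗ[ℂ] FockD :=
  Finsupp.lsum ℂ fun S => LinearMap.toSpanSingleton ℂ FockD (aVec m S)

/-- Fermionic normal ordered product `:a_i a_j:`. -/
def NO (i j : ℤ) : FockD →ₗ[ℂ] FockD :=
  if 0 ≤ i then (aOp i).comp (aOp j) else -((aOp j).comp (aOp i))

/-- Heisenberg operator `h_n = (1/2) ∑_{i∈ℤ} (−1)^{i+1} :a_i a_{−2n−1−i}:`
(on each vector only finitely many summands are nonzero). -/
def hD (n : ℤ) (x : FockD) : FockD :=
  (1 / 2 : ℂ) • ∑ᶠ i : ℤ, ((-1 : ℂ) ^ (i + 1)) • NO i (-2 * n - 1 - i) x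

/-- Virasoro operator `L^{1/2}_m = (1/2) ∑_{i∈ℤ} i · :a_i a_{−m−i−1}:`. -/
def LhalfD (m : ℤ) (x : FockD) : FockD :=
  (1 / 2 : ℂ) • ∑ᶠ i : ℤ, (i : ℂ) • NO i (-m - i - 1) x

/-- 2-point Virasoro operator `L¹_n = (1/2) ∑_{j∈ℤ} :h_j h_{n−j}:`, where the bosonic
normal ordered product is `:h_j h_k: = h_j h_k` if `j ≤ k` and `h_k h_j` otherwise. -/
def L1D (n : ℤ) (x : FockD) : FockD :=
  (1 / 2 : ℂ) • ∑ᶠ j : ℤ, if j ≤ n - j then hD j (hD (n - j) x) else hD (n - j) (hD j x)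

/-- Charge `c(S) = #{s ∈ S : s odd} − #{s ∈ S : s even}`. -/
def chg (S : Finset ℕ) : ℤ :=
  ((S.filter fun s => Odd s).card : ℤ) - ((S.filter fun s => Even s).card : ℤ)

/-- Charge-`n` component `F_{(n)}`: the span of the `e_S` with `c(S) = n`. -/
def FockComp (n : ℤ) : Submodule ℂ FockD :=
  Submodule.span ℂ {x : FockD | ∃ S : Finset ℕ, chg S = n ∧ x = eD S}

/-- Index set of the vacuum-like vector `v_n`. -/
def vSet (n : ℤ) : Finset ℕ :=
  if 0 ≤ n then (Finset.range n.toNat).image fun i => 2 * i + 1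
  else (Finset.range (-n).toNat).image fun i => 2 * i

/-- Vacuum-like vector `v_n` (`v_0 = e_∅`, `v_n = e_{{1,3,…,2n−1}}`,
`v_{−n} = e_{{0,2,…,2n−2}}` for `n > 0`). -/
def vD (n : ℤ) : FockD := eD (vSet n)

/-- The Fock space `F^{⊗1}` of a pair of charged free fermions: basis
`{e_{(A,B)} : A, B finite subsets of ℕ}`. -/
abbrev FockA : Type := (Finset ℕ × Finset ℕ) →₀ ℂ

/-- Basis vector `e_{(A,B)}`. -/
def eA (A B : Finset ℕ) : FockA := Finsupp.single (A, B) 1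

/-- Action of the mode `ψ⁺_m` on the basis vector `e_{(A,B)}`
(`ψ⁺_{−a−1}` creates, `ψ⁺_a` annihilates, `a ∈ ℕ`). -/
def psiPVec (m : ℤ) (p : Finset ℕ × Finset ℕ) : FockA :=
  if m < 0 then
    if (-m - 1).toNat ∈ p.1 then 0
    else ((-1 : ℂ) ^ (p.1.filter (fun x => (-m - 1).toNat < x)).card) •
      eA (insert ((-m - 1).toNat) p.1) p.2
  else
    if m.toNat ∈ p.2 then
      ((-1 : ℂ) ^ (p.1.card + (p.2.filter (fun y => m.toNat < y)).card)) •
        eA p.1 (p.2.erase m.toNat)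
    else 0

/-- Action of the mode `ψ⁻_m` on the basis vector `e_{(A,B)}`. -/
def psiMVec (m : ℤ) (p : Finset ℕ × Finset ℕ) : FockA :=
  if m < 0 then
    if (-m - 1).toNat ∈ p.2 then 0
    else ((-1 : ℂ) ^ (p.1.card + (p.2.filter (fun y => (-m - 1).toNat < y)).card)) •
      eA p.1 (insert ((-m - 1).toNat) p.2)
  else
    if m.toNat ∈ p.1 then
      ((-1 : ℂ) ^ (p.1.filter (fun x => m.toNat < x)).card) • eA (p.1.erase m.toNat) p.2
    else 0

/-- The mode `ψ⁺_m` as a linear operator on `F^{⊗1}`. -/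
def psiP (m : ℤ) : FockA →ₗ[ℂ] FockA :=
  Finsupp.lsum ℂ fun p => LinearMap.toSpanSingleton ℂ FockA (psiPVec m p)

/-- The mode `ψ⁻_m` as a linear operator on `F^{⊗1}`. -/
def psiM (m : ℤ) : FockA →ₗ[ℂ] FockA :=
  Finsupp.lsum ℂ fun p => LinearMap.toSpanSingleton ℂ FockA (psiMVec m p)

/-- Heisenberg operator `h^A_n = ∑_{j∈ℤ} :ψ⁺_j ψ⁻_{n−j−1}:` on `F^{⊗1}`, where
`:ψ⁺_j ψ⁻_k: = ψ⁺_j ψ⁻_k` for `j ≤ −1` and `= −ψ⁻_k ψ⁺_j` for `j ≥ 0`. -/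
def hA (n : ℤ) (x : FockA) : FockA :=
  ∑ᶠ j : ℤ, if j ≤ -1 then psiP j (psiM (n - j - 1) x) else -(psiM (n - j - 1) (psiP j x))

/-- The finite set corresponding to `(A, B)`. -/
def jn (A B : Finset ℕ) : Finset ℕ :=
  A.image (fun a => 2 * a + 1) ∪ B.image (fun b => 2 * b)

theorem mem_jn_odd (A B : Finset ℕ) (a : ℕ) : 2 * a + 1 ∈ jn A B ↔ a ∈ A := by
  simp only [jn, Finset.mem_union, Finset.mem_image]
  constructor
  · rintro (⟨x, hx, h⟩ | ⟨x, hx, h⟩)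
    · obtain rfl : x = a := by omega
      exact hx
    · omega
  · intro h
    exact Or.inl ⟨a, h, rfl⟩

theorem mem_jn_even (A B : Finset ℕ) (b : ℕ) : 2 * b ∈ jn A B ↔ b ∈ B := by
  simp only [jn, Finset.mem_union, Finset.mem_image]
  constructor
  · rintro (⟨x, hx, h⟩ | ⟨x, hx, h⟩)
    · omega
    · obtain rfl : x = b := by omega
      exact hx
  · intro h
    exact Or.inr ⟨b, h, rfl⟩

theorem odd_inj : Function.Injective (fun a : ℕ => 2 * a + 1) := fun a b h => by
  simp only at h; omega

theorem even_inj : Function.Injective (fun a : ℕ => 2 * a) := fun a b h => by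
  simp only at h; omega

def oddPart (S : Finset ℕ) : Finset ℕ := S.preimage (fun a : ℕ => 2 * a + 1) odd_inj.injOn
def evenPart (S : Finset ℕ) : Finset ℕ := S.preimage (fun a : ℕ => 2 * a) even_inj.injOn

theorem ext_parity {S T : Finset ℕ} (h1 : ∀ a, 2 * a + 1 ∈ S ↔ 2 * a + 1 ∈ T)
    (h2 : ∀ a, 2 * a ∈ S ↔ 2 * a ∈ T) : S = T := by
  ext x
  rcases Nat.even_or_odd' x with ⟨k, rfl | rfl⟩
  · exact h2 k
  · exact h1 k

theorem jn_parts (S : Finset ℕ) : jn (oddPart S) (evenPart S) = S := by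
  apply ext_parity
  · intro a; simp [mem_jn_odd, oddPart]
  · intro a; simp [mem_jn_even, evenPart]

theorem oddPart_jn (A B : Finset ℕ) : oddPart (jn A B) = A := by
  ext a; simp [oddPart, mem_jn_odd]

theorem evenPart_jn (A B : Finset ℕ) : evenPart (jn A B) = B := by
  ext a; simp [evenPart, mem_jn_even]

theorem jn_insert_odd (A B : Finset ℕ) (a : ℕ) :
    jn (insert a A) B = insert (2 * a + 1) (jn A B) := by
  apply ext_parity
  · intro x; simp [mem_jn_odd]
  · intro x
    have : 2 * x ≠ 2 * a + 1 := by omega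
    simp [mem_jn_even, this]

theorem jn_insert_even (A B : Finset ℕ) (b : ℕ) :
    jn A (insert b B) = insert (2 * b) (jn A B) := by
  apply ext_parity
  · intro x
    have : 2 * x + 1 ≠ 2 * b := by omega
    simp [mem_jn_odd, this]
  · intro x; simp [mem_jn_even]

theorem card_jn_filter (A B : Finset ℕ) (m : ℕ) :
    ((jn A B).filter (fun s => m < s)).card =
      (A.filter (fun a => m < 2 * a + 1)).card + (B.filter (fun b => m < 2 * b)).card := by
  have : (jn A B).filter (fun s => m < s) =
      jn (A.filter (fun a => m < 2 * a + 1)) (B.filter (fun b => m < 2 * b)) := by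
    apply ext_parity <;> intro x <;> simp [mem_jn_odd, mem_jn_even]
  rw [this, jn, Finset.card_union_of_disjoint, Finset.card_image_of_injective _ odd_inj,
    Finset.card_image_of_injective _ even_inj]
  rw [Finset.disjoint_left]
  intro x hx hy
  simp only [Finset.mem_image] at hx hy
  obtain ⟨a, _, rfl⟩ := hx
  obtain ⟨b, _, h⟩ := hy
  omega

/-- The reordering sign. -/
def sg (A B : Finset ℕ) : ℂ := ∏ a ∈ A, ∏ b ∈ B, if a < b then (-1 : ℂ) else 1

theorem sg_sq (A B : Finset ℕ) : sg A B * sg A B = 1 := by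
  unfold sg
  rw [← Finset.prod_mul_distrib]
  apply Finset.prod_eq_one
  intro a _
  rw [← Finset.prod_mul_distrib]
  apply Finset.prod_eq_one
  intro b _
  split_ifs <;> norm_num

theorem sg_insert_odd (A B : Finset ℕ) (a : ℕ) (h : a ∉ A) :
    sg (insert a A) B = (-1 : ℂ) ^ (B.filter (fun b => a < b)).card * sg A B := by
  unfold sg
  rw [Finset.prod_insert h, Finset.prod_ite]
  simp

theorem sg_insert_even (A B : Finset ℕ) (b : ℕ) (h : b ∉ B) :
    sg A (insert b B) = (-1 : ℂ) ^ (A.filter (fun a => a < b)).card * sg A B := by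
  unfold sg
  simp_rw [Finset.prod_insert h]
  rw [Finset.prod_mul_distrib, Finset.prod_ite]
  simp

def T0 : FockA →ₗ[ℂ] FockD :=
  Finsupp.lsum ℂ fun p => LinearMap.toSpanSingleton ℂ FockD (sg p.1 p.2 • eD (jn p.1 p.2))

def U0 : FockD →ₗ[ℂ] FockA :=
  Finsupp.lsum ℂ fun S => LinearMap.toSpanSingleton ℂ FockA
    (sg (oddPart S) (evenPart S) • eA (oddPart S) (evenPart S))

theorem T0_e (A B : Finset ℕ) : T0 (eA A B) = sg A B • eD (jn A B) := by
  simp [T0, eA]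

theorem U0_e (S : Finset ℕ) : U0 (eD S) =
    sg (oddPart S) (evenPart S) • eA (oddPart S) (evenPart S) := by
  simp [U0, eD]

theorem aOp_e (m : ℤ) (S : Finset ℕ) : aOp m (eD S) = aVec m S := by
  simp [aOp, eD]

theorem psiP_e (m : ℤ) (A B : Finset ℕ) : psiP m (eA A B) = psiPVec m (A, B) := by
  simp [psiP, eA]

theorem psiM_e (m : ℤ) (A B : Finset ℕ) : psiM m (eA A B) = psiMVec m (A, B) := by
  simp [psiM, eA]

theorem extA {M : Type*} [AddCommMonoid M] [Module ℂ M] {f g : FockA →ₗ[ℂ] M}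
    (h : ∀ A B, f (eA A B) = g (eA A B)) : f = g := by
  apply Finsupp.lhom_ext'
  rintro ⟨A, B⟩
  apply LinearMap.ext_ring
  exact h A B

theorem extD {M : Type*} [AddCommMonoid M] [Module ℂ M] {f g : FockD →ₗ[ℂ] M}
    (h : ∀ S, f (eD S) = g (eD S)) : f = g := by
  apply Finsupp.lhom_ext'
  intro S
  apply LinearMap.ext_ring
  exact h S

def TE : FockA ≃ₗ[ℂ] FockD :=
  LinearEquiv.ofLinearMap T0 U0
    (extD fun S => by
      simp [U0_e, T0_e, jn_parts, smul_smul, sg_sq])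
    (extA fun A B => by
      simp [U0_e, T0_e, oddPart_jn, evenPart_jn, smul_smul, sg_sq])

theorem TE_e (A B : Finset ℕ) : TE (eA A B) = sg A B • eD (jn A B) := T0_e A B

/-! Explicit forms of the modes. -/

theorem aVec_nn (m : ℕ) (S : Finset ℕ) : aVec (m : ℤ) S = if m ∈ S then 0
    else ((-1 : ℂ) ^ (S.filter (fun s => m < s)).card) • eD (insert m S) := by
  simp [aVec]

theorem aVec_neg (m : ℕ) (S : Finset ℕ) : aVec (-(m : ℤ) - 1) S = if m ∈ S then
    ((-1 : ℂ) ^ (S.filter (fun s => m < s)).card) • eD (S.erase m) else 0 := by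
  have h : ¬ (0 ≤ -(m : ℤ) - 1) := by omega
  have h2 : (-(-(m : ℤ) - 1) - 1).toNat = m := by omega
  rw [aVec, if_neg h, h2]

theorem psiPVec_nn (m : ℕ) (A B : Finset ℕ) : psiPVec (m : ℤ) (A, B) = if m ∈ B then
    ((-1 : ℂ) ^ (A.card + (B.filter (fun s => m < s)).card)) • eA A (B.erase m) else 0 := by
  simp [psiPVec]

theorem psiPVec_neg (m : ℕ) (A B : Finset ℕ) : psiPVec (-(m : ℤ) - 1) (A, B) = if m ∈ A then 0
    else ((-1 : ℂ) ^ (A.filter (fun s => m < s)).card) • eA (insert m A) B := by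
  have h : (-(m : ℤ) - 1) < 0 := by omega
  have h2 : (-(-(m : ℤ) - 1) - 1).toNat = m := by omega
  rw [psiPVec, if_pos h, h2]

theorem psiMVec_nn (m : ℕ) (A B : Finset ℕ) : psiMVec (m : ℤ) (A, B) = if m ∈ A then
    ((-1 : ℂ) ^ (A.filter (fun s => m < s)).card) • eA (A.erase m) B else 0 := by
  simp [psiMVec]

theorem psiMVec_neg (m : ℕ) (A B : Finset ℕ) : psiMVec (-(m : ℤ) - 1) (A, B) = if m ∈ B then 0
    else ((-1 : ℂ) ^ (A.card + (B.filter (fun s => m < s)).card)) • eA A (insert m B) := by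
  have h : (-(m : ℤ) - 1) < 0 := by omega
  have h2 : (-(-(m : ℤ) - 1) - 1).toNat = m := by omega
  rw [psiMVec, if_pos h, h2]

theorem int_cases (j : ℤ) : (∃ a : ℕ, j = a) ∨ ∃ a : ℕ, j = -(a : ℤ) - 1 := by
  rcases lt_or_ge j 0 with h | h
  · exact Or.inr ⟨(-j - 1).toNat, by omega⟩
  · exact Or.inl ⟨j.toNat, by omega⟩

theorem sgn_sq (n : ℕ) : (-1 : ℂ) ^ n * (-1 : ℂ) ^ n = 1 := by
  rw [← mul_pow]; simp

theorem card_odd_gt (A B : Finset ℕ) (a : ℕ) :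
    ((jn A B).filter (fun s => 2 * a + 1 < s)).card =
      (A.filter (fun x => a < x)).card + (B.filter (fun b => a < b)).card := by
  rw [card_jn_filter]
  congr 2 <;> apply Finset.filter_congr <;> intro x _ <;> omega

theorem card_even_gt (A B : Finset ℕ) (b : ℕ) :
    ((jn A B).filter (fun s => 2 * b < s)).card =
      (A.filter (fun x => ¬ x < b)).card + (B.filter (fun x => b < x)).card := by
  rw [card_jn_filter]
  congr 2 <;> apply Finset.filter_congr <;> intro x _ <;> omega

theorem sgn_split (A : Finset ℕ) (b : ℕ) : (-1 : ℂ) ^ A.card =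
    (-1 : ℂ) ^ (A.filter (fun x => x < b)).card * (-1 : ℂ) ^ (A.filter (fun x => ¬ x < b)).card := by
  rw [← pow_add, Finset.card_filter_add_card_filter_not]

theorem cr_odd (a : ℕ) (A B : Finset ℕ) :
    TE (psiPVec (-(a : ℤ) - 1) (A, B)) = sg A B • aVec ((2 * a + 1 : ℕ) : ℤ) (jn A B) := by
  rw [psiPVec_neg, aVec_nn]
  simp only [mem_jn_odd]
  split_ifs with h
  · simp
  · rw [map_smul, TE_e, sg_insert_odd _ _ _ h, jn_insert_odd, card_odd_gt, smul_smul, smul_smul]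
    congr 1
    rw [pow_add]; ring

theorem cr_even (b : ℕ) (A B : Finset ℕ) :
    TE (psiMVec (-(b : ℤ) - 1) (A, B)) = sg A B • aVec ((2 * b : ℕ) : ℤ) (jn A B) := by
  rw [psiMVec_neg, aVec_nn]
  simp only [mem_jn_even]
  split_ifs with h
  · simp
  · rw [map_smul, TE_e, sg_insert_even _ _ _ h, jn_insert_even, card_even_gt, smul_smul, smul_smul]
    congr 1
    rw [pow_add, pow_add, sgn_split A b]
    linear_combination ((-1 : ℂ) ^ (A.filter (fun x => ¬ x < b)).card *
      (-1 : ℂ) ^ (B.filter (fun x => b < x)).card * sg A B) *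
      sgn_sq (A.filter (fun x => x < b)).card

theorem an_odd (a : ℕ) (A B : Finset ℕ) :
    TE (psiMVec (a : ℤ) (A, B)) = sg A B • aVec (-((2 * a + 1 : ℕ) : ℤ) - 1) (jn A B) := by
  rw [psiMVec_nn, aVec_neg]
  simp only [mem_jn_odd]
  split_ifs with h
  · obtain ⟨A, h', rfl⟩ : ∃ A', a ∉ A' ∧ insert a A' = A :=
      ⟨A.erase a, by simp, Finset.insert_erase h⟩
    rw [map_smul, Finset.erase_insert h', TE_e, sg_insert_odd _ _ _ h', card_odd_gt,
      jn_insert_odd, Finset.erase_insert (by rwa [mem_jn_odd]), smul_smul, smul_smul]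
    congr 1
    rw [pow_add]
    linear_combination (-(-1 : ℂ) ^ ((insert a A).filter (fun x => a < x)).card * sg A B) *
      sgn_sq (B.filter (fun x => a < x)).card
  · simp

theorem an_even (b : ℕ) (A B : Finset ℕ) :
    TE (psiPVec (b : ℤ) (A, B)) = sg A B • aVec (-((2 * b : ℕ) : ℤ) - 1) (jn A B) := by
  rw [psiPVec_nn, aVec_neg]
  simp only [mem_jn_even]
  split_ifs with h
  · obtain ⟨B, h', rfl⟩ : ∃ B', b ∉ B' ∧ insert b B' = B :=
      ⟨B.erase b, by simp, Finset.insert_erase h⟩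
    rw [map_smul, Finset.erase_insert h', TE_e, sg_insert_even _ _ _ h', card_even_gt,
      jn_insert_even, Finset.erase_insert (by rwa [mem_jn_even]), smul_smul, smul_smul]
    congr 1
    rw [pow_add, pow_add, sgn_split A b]
    ring
  · simp

theorem TE_psiP (j : ℤ) (x : FockA) : TE (psiP j x) = aOp (-2 * j - 1) (TE x) := by
  have : TE.toLinearMap ∘ₗ psiP j = aOp (-2 * j - 1) ∘ₗ TE.toLinearMap := by
    apply extA
    intro A B
    simp only [LinearMap.comp_apply, LinearEquiv.coe_coe, psiP_e, TE_e, map_smul, aOp_e]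
    rcases int_cases j with ⟨a, rfl⟩ | ⟨a, rfl⟩
    · rw [an_even]; congr 2
    · rw [cr_odd]; congr 2; push_cast; ring
  exact LinearMap.congr_fun this x

theorem TE_psiM (j : ℤ) (x : FockA) : TE (psiM j x) = aOp (-2 * j - 2) (TE x) := by
  have : TE.toLinearMap ∘ₗ psiM j = aOp (-2 * j - 2) ∘ₗ TE.toLinearMap := by
    apply extA
    intro A B
    simp only [LinearMap.comp_apply, LinearEquiv.coe_coe, psiM_e, TE_e, map_smul, aOp_e]
    rcases int_cases j with ⟨a, rfl⟩ | ⟨a, rfl⟩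
    · rw [an_odd]; congr 2; push_cast; ring
    · rw [cr_even]; congr 2; push_cast; ring
  exact LinearMap.congr_fun this x

/-- `ψ⁺` and `ψ⁻` modes with indices of the same sign anticommute. -/
theorem anti (j k : ℤ) (h : 0 ≤ j ↔ 0 ≤ k) (x : FockA) :
    psiP j (psiM k x) = -(psiM k (psiP j x)) := by
  have : psiP j ∘ₗ psiM k = -(psiM k ∘ₗ psiP j) := by
    apply extA
    intro A B
    simp only [LinearMap.comp_apply, LinearMap.neg_apply, psiM_e, psiP_e]
    rcases int_cases j with ⟨a, rfl⟩ | ⟨a, rfl⟩ <;> rcases int_cases k with ⟨b, rfl⟩ | ⟨b, rfl⟩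
    · rw [psiMVec_nn, psiPVec_nn]
      by_cases hA : b ∈ A <;> by_cases hB : a ∈ B <;>
        simp only [hA, hB, if_true, if_false, map_smul, psiM_e, psiP_e, psiMVec_nn, psiPVec_nn,
          map_zero, smul_zero, neg_zero]
      rw [smul_smul, smul_smul, ← neg_smul]
      congr 1
      rw [← Finset.card_erase_add_one hA]
      ring
    · omega
    · omega
    · rw [psiMVec_neg, psiPVec_neg]
      by_cases hA : a ∈ A <;> by_cases hB : b ∈ B <;>
        simp only [hA, hB, if_true, if_false, map_smul, psiM_e, psiP_e, psiMVec_neg, psiPVec_neg,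
          map_zero, smul_zero, neg_zero]
      rw [smul_smul, smul_smul, ← neg_smul]
      congr 1
      rw [Finset.card_insert_of_notMem hA]
      ring
  exact LinearMap.congr_fun this x

/-- The summand of `hA`. -/
def gA (n : ℤ) (x : FockA) (j : ℤ) : FockA :=
  if j ≤ -1 then psiP j (psiM (n - j - 1) x) else -(psiM (n - j - 1) (psiP j x))

theorem NO_odd (n j : ℤ) (x : FockA) :
    NO (-2 * j - 1) (-2 * n - 1 - (-2 * j - 1)) (TE x) = TE (gA n x j) := by
  have e : -2 * n - 1 - (-2 * j - 1) = -2 * (n - j - 1) - 2 := by ring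
  rw [e, NO, gA]
  by_cases h : j ≤ -1
  · rw [if_pos h, if_pos (by omega), TE_psiP, TE_psiM]; rfl
  · rw [if_neg h, if_neg (by omega), map_neg, TE_psiM, TE_psiP]; rfl

theorem NO_even (n j : ℤ) (x : FockA) :
    NO (-2 * (n - j - 1) - 2) (-2 * n - 1 - (-2 * (n - j - 1) - 2)) (TE x) = -TE (gA n x j) := by
  have e : -2 * n - 1 - (-2 * (n - j - 1) - 2) = -2 * j - 1 := by ring
  rw [e, NO, gA]
  by_cases h : 0 ≤ -2 * (n - j - 1) - 2
  · rw [if_pos h]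
    have e1 : (aOp (-2 * (n - j - 1) - 2) ∘ₗ aOp (-2 * j - 1)) (TE x) =
        TE (psiM (n - j - 1) (psiP j x)) := by
      rw [TE_psiM, TE_psiP]; rfl
    rw [e1]
    split_ifs with h2
    · rw [anti _ _ (by omega), map_neg, neg_neg]
    · rw [map_neg, neg_neg]
  · rw [if_neg h]
    have e1 : (aOp (-2 * j - 1) ∘ₗ aOp (-2 * (n - j - 1) - 2)) (TE x) =
        TE (psiP j (psiM (n - j - 1) x)) := by
      rw [TE_psiP, TE_psiM]; rfl
    rw [LinearMap.neg_apply, e1]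
    split_ifs with h2
    · rfl
    · rw [anti _ _ (by omega)]

theorem finsum_two (n : ℤ) (f g : ℤ → FockD) (h1 : ∀ j, f (-2 * j - 1) = g j)
    (h2 : ∀ j, f (-2 * (n - j - 1) - 2) = g j) : ∑ᶠ i, f i = (2 : ℂ) • ∑ᶠ j, g j := by
  have i1 : Function.Injective (fun j : ℤ => -2 * j - 1) := fun a b h => by
    simp only at h; omega
  have i2 : Function.Injective (fun j : ℤ => -2 * (n - j - 1) - 2) := fun a b h => by
    simp only at h; omega
  have hu : (Set.univ : Set ℤ) =
      Set.range (fun j : ℤ => -2 * j - 1) ∪ Set.range (fun j : ℤ => -2 * (n - j - 1) - 2) := by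
    symm
    rw [Set.eq_univ_iff_forall]
    intro i
    rcases Int.even_or_odd' i with ⟨k, rfl | rfl⟩
    · right; exact ⟨k + n, by ring⟩
    · left; exact ⟨-k - 1, by ring⟩
  by_cases hg : (Function.support g).Finite
  · have hf1 : (Set.range (fun j : ℤ => -2 * j - 1) ∩ Function.support f).Finite := by
      apply (hg.image (fun j : ℤ => -2 * j - 1)).subset
      rintro _ ⟨⟨j, rfl⟩, hj⟩
      refine ⟨j, ?_, rfl⟩
      simpa [Function.mem_support, ← h1] using hj
    have hf2 : (Set.range (fun j : ℤ => -2 * (n - j - 1) - 2) ∩ Function.support f).Finite := by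
      apply (hg.image (fun j : ℤ => -2 * (n - j - 1) - 2)).subset
      rintro _ ⟨⟨j, rfl⟩, hj⟩
      refine ⟨j, ?_, rfl⟩
      rw [Function.mem_support, ← h2]
      exact hj
    rw [← finsum_mem_univ f, hu, finsum_mem_union' _ hf1 hf2, finsum_mem_range i1,
      finsum_mem_range i2]
    · simp only [h1, h2]
      rw [two_smul]
    · rw [Set.disjoint_left]
      rintro _ ⟨a, rfl⟩ ⟨b, hb⟩
      simp only at hb
      omega
  · have hf : ¬ (Function.support f).Finite := by
      intro hf
      apply hg
      have := hf.preimage (f := fun j : ℤ => -2 * j - 1) i1.injOn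
      apply this.subset
      intro j hj
      simp only [Set.mem_preimage, Function.mem_support, h1]
      exact hj
    rw [finsum_of_infinite_support hg, finsum_of_infinite_support hf, smul_zero]

theorem main_TE (n : ℤ) (x : FockA) : hD n (TE x) = TE (hA n x) := by
  have e : TE (hA n x) = ∑ᶠ j, TE (gA n x j) := TE.toAddEquiv.map_finsum (gA n x)
  rw [e, hD, finsum_two n _ (fun j => TE (gA n x j)), smul_smul]
  · norm_num
  · intro j
    rw [NO_odd, Even.neg_one_zpow ⟨-j, by ring⟩, one_smul]
  · intro j
    rw [NO_even, Odd.neg_one_zpow ⟨-(n - j - 1) - 1, by ring⟩, neg_smul, one_smul, neg_neg]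

/-- As modules for the Heisenberg algebra `H_ℤ`, the neutral fermion Fock space `F^{⊗1/2}`
is isomorphic to the charged free fermion Fock space `F^{⊗1}`: there is a ℂ-linear
bijection `U : F → F^{⊗1}` with `U(h_n x) = h^A_n(U x)` for all `n ∈ ℤ`, `x ∈ F`. -/
theorem heisenberg_module_isomorphism :
    ∃ U : FockD ≃ₗ[ℂ] FockA, ∀ (n : ℤ) (x : FockD), U (hD n x) = hA n (U x) := by
  refine ⟨TE.symm, fun n x => ?_⟩
  rw [LinearEquiv.symm_apply_eq, ← main_TE, LinearEquiv.apply_symm_apply]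
end
end

section
/- Let q, z be complex numbers with 0 < |q| < 1 and z ≠ 0. Then the family (z^{c(S)} q^{w(S)})_{S finite ⊆ ℕ} is absolutely summable and ∑_{S finite ⊆ ℕ} z^{c(S)} q^{w(S)} = ∏_{i=0}^{∞} (1 + z q^{4i+3})(1 + z^{−1} q^{4i+1}). (This is the fermionic graded dimension formula ch F = tr_F q^{L_0} z^{h_0} = ∏_{i≥1}(1 + z q^{2i−1/2})(1 + z^{−1} q^{2i−3/2}) of the paper, with q replaced by q² to avoid half-integer exponents.) -/
noncomputable section

/-- Weight `w(S) = ∑_{s∈S} (2s+1)` of a finite set `S ⊆ ℕ`. -/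
def wgt (S : Finset ℕ) : ℕ := ∑ s ∈ S, (2 * s + 1)

/-- The one-particle contribution of the mode `s`. -/
def modeTerm (q z : ℂ) (s : ℕ) : ℂ := (if Odd s then z else z⁻¹) * q ^ (2 * s + 1)

lemma prod_modeTerm (q z : ℂ) (hz : z ≠ 0) (S : Finset ℕ) :
    ∏ s ∈ S, modeTerm q z s = z ^ chg S * q ^ wgt S := by
  unfold modeTerm chg wgt
  rw [Finset.prod_mul_distrib, Finset.prod_pow_eq_pow_sum, Finset.prod_ite, Finset.prod_const,
    Finset.prod_const, zpow_sub₀ hz]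
  simp only [Nat.not_odd_iff_even, zpow_natCast, inv_pow, div_eq_mul_inv]

lemma summable_modeTerm (q z : ℂ) (hq1 : ‖q‖ < 1) :
    Summable (fun s => ‖modeTerm q z s‖) := by
  have h : Summable (fun s : ℕ => (‖z‖ + ‖z⁻¹‖) * ‖q‖ ^ s) :=
    (summable_geometric_of_lt_one (norm_nonneg q) hq1).mul_left _
  refine h.of_nonneg_of_le (fun _ => norm_nonneg _) fun s => ?_
  unfold modeTerm
  rw [norm_mul, norm_pow]
  refine mul_le_mul ?_ (pow_le_pow_of_le_one (norm_nonneg q) hq1.le (by omega))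
    (by positivity) (by positivity)
  have h1 := norm_nonneg z
  have h2 := norm_nonneg z⁻¹
  split_ifs <;> linarith

/-- Fermionic graded dimension formula for `F^{⊗1/2}` (with `q` replaced by `q²`):
`∑_{S finite ⊆ ℕ} z^{c(S)} q^{w(S)} = ∏_{i=0}^∞ (1 + z q^{4i+3})(1 + z⁻¹ q^{4i+1})`,
the family on the left being absolutely summable. -/
theorem fermionic_graded_dimension (q z : ℂ) (hq0 : 0 < ‖q‖) (hq1 : ‖q‖ < 1) (hz : z ≠ 0) :
    Summable (fun S : Finset ℕ => ‖z ^ chg S * q ^ wgt S‖) ∧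
    ∑' S : Finset ℕ, z ^ chg S * q ^ wgt S
      = ∏' i : ℕ, (1 + z * q ^ (4 * i + 3)) * (1 + z⁻¹ * q ^ (4 * i + 1)) := by
  have hs := summable_modeTerm q z hq1
  have hp : (fun S : Finset ℕ => z ^ chg S * q ^ wgt S) = fun S => ∏ s ∈ S, modeTerm q z s :=
    funext fun S => (prod_modeTerm q z hz S).symm
  constructor
  · have h := summable_finsetProd_of_summable_nonneg (fun _ => norm_nonneg _) hs
    refine h.congr fun S => ?_
    rw [← prod_modeTerm q z hz S, norm_prod]
  · rw [hp, ← tprod_one_add (summable_finsetProd_of_summable_norm hs)]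
    have he : Multipliable fun k : ℕ => 1 + modeTerm q z (2 * k) :=
      multipliable_one_add_of_summable
        (hs.comp_injective (mul_right_injective₀ (two_ne_zero' ℕ)))
    have ho : Multipliable fun k : ℕ => 1 + modeTerm q z (2 * k + 1) :=
      multipliable_one_add_of_summable
        (hs.comp_injective (i := fun k : ℕ => 2 * k + 1) (fun a b hab => by simpa using hab))
    rw [← tprod_even_mul_odd (f := fun s => 1 + modeTerm q z s) he ho, mul_comm,
      ← ho.tprod_mul he]
    refine tprod_congr fun i => ?_
    have e1 : modeTerm q z (2 * i + 1) = z * q ^ (4 * i + 3) := by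
      unfold modeTerm
      rw [if_pos ⟨i, rfl⟩]
      ring
    have e2 : modeTerm q z (2 * i) = z⁻¹ * q ^ (4 * i + 1) := by
      unfold modeTerm
      rw [if_neg (by simp)]
      ring
    rw [e1, e2]
end
end

section
/- Let q, z be complex numbers with 0 < |q| < 1 and z ≠ 0. Then (∑_{S finite ⊆ ℕ} z^{c(S)} q^{w(S)}) · ∏_{i=0}^{∞} (1 − q^{4i+4}) = ∑_{n∈ℤ} z^n q^{2n²+n}, where the sum over finite subsets and the sum over ℤ are absolutely convergent and the infinite product converges. (This is the bosonic graded dimension formula ch F = (∏_{i≥1}(1−q^{2i}))^{−1} ∑_{n∈ℤ} z^n q^{n/2} q^{n²} of the paper, with q replaced by q².) -/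
noncomputable section

open Filter Topology

/-- Charge-weighted factor of a single fermion mode. -/
def modeFactor (q z : ℂ) (s : ℕ) : ℂ := z ^ (if Odd s then (1 : ℤ) else -1) * q ^ (2 * s + 1)

lemma term_eq_prod (q z : ℂ) (hz : z ≠ 0) (S : Finset ℕ) :
    z ^ chg S * q ^ wgt S = ∏ s ∈ S, modeFactor q z s := by
  induction S using Finset.induction_on with
  | empty => simp [chg, wgt]
  | insert a S ha ih =>
    have hc : chg (insert a S) = (if Odd a then (1 : ℤ) else -1) + chg S := by
      unfold chg
      rw [Finset.filter_insert, Finset.filter_insert]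
      by_cases h : Odd a
      · have h' : ¬ Even a := Nat.not_even_iff_odd.mpr h
        simp only [h, h', if_true, if_false]
        rw [Finset.card_insert_of_notMem (by simp [ha])]
        push_cast; ring
      · have h' : Even a := Nat.not_odd_iff_even.mp h
        simp only [h, h', if_true, if_false]
        rw [Finset.card_insert_of_notMem (by simp [ha])]
        push_cast; ring
    have hw : wgt (insert a S) = (2 * a + 1) + wgt S := by
      unfold wgt
      rw [Finset.sum_insert ha]
    rw [Finset.prod_insert ha, ← ih, hc, hw, zpow_add₀ hz, pow_add, modeFactor]
    ring

lemma summable_modeFactor (q z : ℂ) (hq1 : ‖q‖ < 1) :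
    Summable (fun s => ‖modeFactor q z s‖) := by
  have hg : Summable (fun s : ℕ => (‖z‖ + ‖z⁻¹‖) * ‖q‖ ^ s) :=
    (summable_geometric_of_lt_one (norm_nonneg _) hq1).mul_left _
  refine hg.of_nonneg_of_le (fun _ => norm_nonneg _) fun s => ?_
  unfold modeFactor
  rw [norm_mul, norm_pow]
  have h1 : ‖z ^ (if Odd s then (1 : ℤ) else -1)‖ ≤ ‖z‖ + ‖z⁻¹‖ := by
    split_ifs
    · rw [zpow_one]; linarith [norm_nonneg z⁻¹]
    · rw [zpow_neg_one]; linarith [norm_nonneg z]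
  have h2 : ‖q‖ ^ (2 * s + 1) ≤ ‖q‖ ^ s :=
    pow_le_pow_of_le_one (norm_nonneg _) hq1.le (by omega)
  gcongr

/-- Gaussian binomial coefficients, indexed by all integers. -/
def gb (Q : ℂ) : ℕ → ℤ → ℂ
  | 0, j => if j = 0 then 1 else 0
  | N + 1, j => gb Q N (j - 1) + Q ^ j * gb Q N j

lemma gb_succ' (Q : ℂ) (hQ : Q ≠ 0) (N : ℕ) (j : ℤ) :
    gb Q (N + 1) j = Q ^ ((N : ℤ) + 1 - j) * gb Q N (j - 1) + gb Q N j := by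
  induction N generalizing j with
  | zero =>
    simp only [gb]
    by_cases h0 : j = 0
    · subst h0; simp
    · by_cases h1 : j = 1
      · subst h1; simp
      · have : j - 1 ≠ 0 := by omega
        simp [h0, this]
  | succ N ih =>
    have e : gb Q (N + 1 + 1) j = gb Q (N + 1) (j - 1) + Q ^ j * gb Q (N + 1) j := rfl
    have e2 : gb Q (N + 1) (j - 1) = gb Q N (j - 1 - 1) + Q ^ (j - 1) * gb Q N (j - 1) := rfl
    have e3 : gb Q (N + 1) j = gb Q N (j - 1) + Q ^ j * gb Q N j := rfl
    have p1 : Q ^ (((N + 1 : ℕ) : ℤ) + 1 - j) * Q ^ (j - 1) = Q ^ j * Q ^ ((N : ℤ) + 1 - j) := by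
      rw [← zpow_add₀ hQ, ← zpow_add₀ hQ]; congr 1; push_cast; ring
    have p2 : ((N : ℤ) + 1 - (j - 1)) = ((N + 1 : ℕ) : ℤ) + 1 - j := by push_cast; ring
    rw [e]
    nth_rewrite 1 [ih (j - 1)]
    nth_rewrite 1 [ih j]
    rw [e2, e3, p2]
    linear_combination (- gb Q N (j - 1)) * p1

lemma gb_neg (Q : ℂ) (N : ℕ) (j : ℤ) (hj : j < 0) : gb Q N j = 0 := by
  induction N generalizing j with
  | zero => simp [gb, hj.ne]
  | succ N ih => simp [gb, ih j hj, ih (j - 1) (by omega)]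

lemma gb_gt (Q : ℂ) (N : ℕ) (j : ℤ) (hj : (N : ℤ) < j) : gb Q N j = 0 := by
  induction N generalizing j with
  | zero => simp only [gb]; rw [if_neg]; push_cast at hj; omega
  | succ N ih =>
    push_cast at hj
    simp [gb, ih j (by omega), ih (j - 1) (by omega)]

/-- Finite Pochhammer product `∏_{i<m} (1 - Q^(i+1))`. -/
def poch (Q : ℂ) (m : ℕ) : ℂ := ∏ i ∈ Finset.range m, (1 - Q ^ (i + 1))

lemma poch_succ (Q : ℂ) (m : ℕ) : poch Q (m + 1) = poch Q m * (1 - Q ^ (m + 1)) := by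
  simp [poch, Finset.prod_range_succ]

lemma gb_zero_right (Q : ℂ) (N : ℕ) : gb Q N 0 = 1 := by
  induction N with
  | zero => simp [gb]
  | succ N ih => simp [gb, ih, gb_neg]

lemma gb_self (Q : ℂ) (N : ℕ) : gb Q N N = 1 := by
  induction N with
  | zero => simp [gb]
  | succ N ih => 
    have : gb Q N ((N : ℤ) + 1) = 0 := gb_gt _ _ _ (by omega)
    simp [gb, ih, this]

lemma gb_formula (Q : ℂ) (N : ℕ) : ∀ a b : ℕ, a + b = N →
    gb Q N a * (poch Q a * poch Q b) = poch Q N := by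
  induction N with
  | zero =>
    intro a b h
    obtain ⟨rfl, rfl⟩ : a = 0 ∧ b = 0 := by omega
    simp [gb, poch]
  | succ N ih =>
    intro a b h
    rcases a with _ | a
    · obtain rfl : b = N + 1 := by omega
      have := gb_zero_right Q (N + 1)
      simp [this, poch]
    rcases b with _ | b
    · obtain rfl : a = N := by omega
      rw [gb_self]; simp [poch]
    have h1 := ih a (b + 1) (by omega)
    have h2 := ih (a + 1) b (by omega)
    have e : gb Q (N + 1) ((a + 1 : ℕ) : ℤ)
        = gb Q N a + Q ^ (a + 1) * gb Q N ((a + 1 : ℕ) : ℤ) := by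
      have : gb Q (N + 1) ((a + 1 : ℕ) : ℤ) = gb Q N (((a + 1 : ℕ) : ℤ) - 1)
        + Q ^ ((a + 1 : ℕ) : ℤ) * gb Q N ((a + 1 : ℕ) : ℤ) := rfl
      rw [this, zpow_natCast]
      congr 2
      push_cast; ring
    have hN : N = a + b + 1 := by omega
    have pN : poch Q (N + 1) = poch Q N * (1 - Q ^ (a + 1) * Q ^ (b + 1)) := by
      rw [poch_succ, ← pow_add]; congr 3; omega
    rw [e, pN]
    rw [poch_succ Q b] at h1 ⊢
    rw [poch_succ Q a] at h2 ⊢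
    linear_combination (1 - Q ^ (a + 1)) * h1 + Q ^ (a + 1) * (1 - Q ^ (b + 1)) * h2

/-- The theta term. -/
def th (q z : ℂ) (n : ℤ) : ℂ := z ^ n * q ^ (2 * n ^ 2 + n)

lemma finite_jtp (q z : ℂ) (hq : q ≠ 0) (hz : z ≠ 0) (m : ℕ) :
    HasSum (fun n : ℤ => th q z n * gb (q ^ 4) (2 * m) (m + n))
      (∏ s ∈ Finset.range (2 * m), (1 + modeFactor q z s)) := by
  have hQ : q ^ 4 ≠ 0 := pow_ne_zero _ hq
  induction m with
  | zero =>
    have := hasSum_single (f := fun n : ℤ => th q z n * gb (q ^ 4) (2 * 0) ((0 : ℕ) + n)) 0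
      (fun n hn => by simp [gb, hn])
    simpa [th, gb] using this
  | succ m ih =>
    have hodd : modeFactor q z (2 * m + 1) = z * q ^ (4 * (m : ℤ) + 3) := by
      have : Odd (2 * m + 1) := ⟨m, rfl⟩
      simp only [modeFactor, this, if_true, zpow_one]
      rw [← zpow_natCast q]; congr 2; push_cast; ring
    have heven : modeFactor q z (2 * m) = z⁻¹ * q ^ (4 * (m : ℤ) + 1) := by
      have : ¬ Odd (2 * m) := by simp
      simp only [modeFactor, this, if_false, zpow_neg_one]
      rw [← zpow_natCast q]; congr 2; push_cast; ring
    have hp (k : ℤ) : (q ^ 4) ^ k = q ^ (4 * k) := by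
      rw [zpow_mul]; norm_cast
    -- first step
    have s1 : HasSum (fun n : ℤ => th q z n * gb (q ^ 4) (2 * m + 1) (m + n))
        ((∏ s ∈ Finset.range (2 * m), (1 + modeFactor q z s)) *
          (1 + modeFactor q z (2 * m + 1))) := by
      have sh := ((Equiv.subRight (1 : ℤ)).hasSum_iff.mpr ih).mul_right
        (modeFactor q z (2 * m + 1))
      have := ih.add sh
      rw [mul_add, mul_one]
      refine this.congr_fun ?_ 
      intro n
      simp only [Function.comp, Equiv.subRight_apply]
      rw [gb_succ' _ hQ, hodd, hp]
      have e : (m : ℤ) + (n - 1) = m + n - 1 := by ring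
      rw [e]
      have t : th q z (n - 1) * (z * q ^ (4 * (m : ℤ) + 3))
          = th q z n * q ^ (4 * (((2 * m : ℕ) : ℤ) + 1 - (m + n))) := by
        unfold th
        rw [zpow_sub_one₀ hz]
        have : q ^ (2 * n ^ 2 + n) * q ^ (4 * (((2 * m : ℕ) : ℤ) + 1 - (m + n)))
          = q ^ (2 * (n - 1) ^ 2 + (n - 1)) * q ^ (4 * (m : ℤ) + 3) := by
          rw [← zpow_add₀ hq, ← zpow_add₀ hq]; congr 1; push_cast; ring
        rw [mul_assoc (z ^ n) (q ^ (2 * n ^ 2 + n)), this]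
        field_simp
      linear_combination (-gb (q ^ 4) (2 * m) (m + n - 1)) * t
    have sh := ((Equiv.addRight (1 : ℤ)).hasSum_iff.mpr s1).mul_right
        (modeFactor q z (2 * m))
    have := s1.add sh
    have hpr : (∏ s ∈ Finset.range (2 * (m + 1)), (1 + modeFactor q z s))
        = (∏ s ∈ Finset.range (2 * m), (1 + modeFactor q z s)) *
          (1 + modeFactor q z (2 * m + 1)) + (∏ s ∈ Finset.range (2 * m), (1 + modeFactor q z s)) *
          (1 + modeFactor q z (2 * m + 1)) * modeFactor q z (2 * m) := by
      rw [show 2 * (m + 1) = 2 * m + 1 + 1 by ring, Finset.prod_range_succ, Finset.prod_range_succ]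
      ring
    rw [hpr]
    refine this.congr_fun ?_
    intro n
    simp only [Function.comp, Equiv.coe_addRight]
    have e0 : gb (q ^ 4) (2 * (m + 1)) (((m + 1 : ℕ) : ℤ) + n)
      = gb (q ^ 4) (2 * m + 1) (((m + 1 : ℕ) : ℤ) + n - 1)
        + (q ^ 4) ^ (((m + 1 : ℕ) : ℤ) + n) * gb (q ^ 4) (2 * m + 1) (((m + 1 : ℕ) : ℤ) + n) := rfl
    have e1 : ((m + 1 : ℕ) : ℤ) + n - 1 = m + n := by push_cast; ring
    have e2 : ((m + 1 : ℕ) : ℤ) + n = m + (n + 1) := by push_cast; ring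
    rw [e0, e1, e2, heven, hp]
    have t : th q z (n + 1) * (z⁻¹ * q ^ (4 * (m : ℤ) + 1))
          = th q z n * q ^ (4 * ((m : ℤ) + (n + 1))) := by
      unfold th
      rw [zpow_add_one₀ hz]
      have : q ^ (2 * n ^ 2 + n) * q ^ (4 * ((m : ℤ) + (n + 1)))
          = q ^ (2 * (n + 1) ^ 2 + (n + 1)) * q ^ (4 * (m : ℤ) + 1) := by
        rw [← zpow_add₀ hq, ← zpow_add₀ hq]; congr 1; ring
      rw [mul_assoc (z ^ n) (q ^ (2 * n ^ 2 + n)), this]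
      field_simp
    linear_combination (-gb (q ^ 4) (2 * m + 1) (m + (n + 1))) * t

lemma summable_gauss (x y : ℂ) (hx : x ≠ 0) (hy : y ≠ 0) (hy1 : ‖y‖ < 1) :
    Summable (fun n : ℕ => x ^ n * y ^ (n ^ 2)) := by
  refine summable_of_ratio_test_tendsto_lt_one (l := 0) zero_lt_one
    (Eventually.of_forall fun n => mul_ne_zero (pow_ne_zero _ hx) (pow_ne_zero _ hy)) ?_
  have h : Tendsto (fun n : ℕ => ‖x‖ * ‖y‖ * (‖y‖ ^ 2) ^ n) atTop (𝓝 (‖x‖ * ‖y‖ * 0)) :=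
    (tendsto_pow_atTop_nhds_zero_of_lt_one (by positivity)
      (pow_lt_one₀ (norm_nonneg _) hy1 two_ne_zero)).const_mul _
  rw [mul_zero] at h
  refine h.congr fun n => ?_
  have hx' : ‖x‖ ≠ 0 := norm_ne_zero_iff.mpr hx
  have hy' : ‖y‖ ≠ 0 := norm_ne_zero_iff.mpr hy
  simp only [norm_mul, norm_pow]
  rw [eq_div_iff (by positivity)]
  ring

lemma summable_th (q z : ℂ) (hq : q ≠ 0) (hq1 : ‖q‖ < 1) (hz : z ≠ 0) :
    Summable (th q z) := by
  have hy1 : ‖q ^ 2‖ < 1 := by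
    rw [norm_pow]; exact pow_lt_one₀ (norm_nonneg _) hq1 two_ne_zero
  have hy : q ^ 2 ≠ 0 := pow_ne_zero _ hq
  apply Summable.of_nat_of_neg
  · refine (summable_gauss (z * q) (q ^ 2) (mul_ne_zero hz hq) hy hy1).congr fun n => ?_
    unfold th
    rw [mul_pow, ← pow_mul, mul_assoc, ← pow_add, ← zpow_natCast z, ← zpow_natCast q]
    congr 2; push_cast; ring
  · refine (summable_gauss (z * q)⁻¹ (q ^ 2) (inv_ne_zero (mul_ne_zero hz hq)) hy hy1).congr
      fun n => ?_
    unfold th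
    rw [← pow_mul, mul_inv, mul_pow, inv_pow, inv_pow, ← zpow_natCast z, ← zpow_natCast q,
      ← zpow_natCast q, ← zpow_neg, ← zpow_neg, mul_assoc, ← zpow_add₀ hq]
    congr 2; push_cast; ring

lemma summable_neg_pow (Q : ℂ) (hQ1 : ‖Q‖ < 1) : Summable (fun i : ℕ => ‖-Q ^ (i + 1)‖) := by
  simp only [norm_neg, norm_pow]
  exact (summable_nat_add_iff 1).mpr (summable_geometric_of_lt_one (norm_nonneg _) hQ1)

lemma one_sub_pow_ne (Q : ℂ) (hQ1 : ‖Q‖ < 1) (i : ℕ) : 1 + -Q ^ (i + 1) ≠ 0 := by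
  intro h
  have h' : Q ^ (i + 1) = 1 := by linear_combination -h
  have := pow_lt_one₀ (norm_nonneg _) hQ1 (Nat.succ_ne_zero i)
  rw [← norm_pow, Nat.succ_eq_add_one, h', norm_one] at this
  exact lt_irrefl _ this

theorem bosonic_graded_dimension (q z : ℂ) (hq0 : 0 < ‖q‖) (hq1 : ‖q‖ < 1) (hz : z ≠ 0) :
    Summable (fun S : Finset ℕ => ‖z ^ chg S * q ^ wgt S‖) ∧
    Multipliable (fun i : ℕ => 1 - q ^ (4 * i + 4)) ∧
    Summable (fun n : ℤ => ‖z ^ n * q ^ (2 * n ^ 2 + n)‖) ∧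
    (∑' S : Finset ℕ, z ^ chg S * q ^ wgt S) * ∏' i : ℕ, (1 - q ^ (4 * i + 4))
      = ∑' n : ℤ, z ^ n * q ^ (2 * n ^ 2 + n) := by
  have hq : q ≠ 0 := norm_pos_iff.mp hq0
  have hQ1 : ‖q ^ 4‖ < 1 := by
    rw [norm_pow]; exact pow_lt_one₀ (norm_nonneg _) hq1 (by norm_num)
  have hfac : (fun i : ℕ => 1 - q ^ (4 * i + 4)) = fun i : ℕ => 1 + -(q ^ 4) ^ (i + 1) := by
    funext i; rw [← pow_mul, mul_add, mul_one, sub_eq_add_neg]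
  have hsf := summable_modeFactor q z hq1
  have hth := summable_th q z hq hq1 hz
  have hmul : Multipliable (fun i : ℕ => 1 + -(q ^ 4) ^ (i + 1)) :=
    multipliable_one_add_of_summable (summable_neg_pow _ hQ1)
  have hsum := summable_finsetProd_of_summable_norm hsf
  rw [hfac]
  simp only [term_eq_prod q z hz]
  refine ⟨?_, hmul, hth.norm, ?_⟩
  · simp only [norm_prod]
    exact summable_finsetProd_of_summable_nonneg (fun _ => norm_nonneg _) hsf
  have hne : ∏' i : ℕ, (1 + -(q ^ 4) ^ (i + 1)) ≠ 0 :=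
    tprod_one_add_ne_zero_of_summable (one_sub_pow_ne _ hQ1) (summable_neg_pow _ hQ1)
  set L := ∏' i : ℕ, (1 + -(q ^ 4) ^ (i + 1)) with hL
  have hP : Tendsto (poch (q ^ 4)) atTop (𝓝 L) := by
    refine hmul.hasProd.tendsto_prod_nat.congr fun m => ?_
    simp [poch, sub_eq_add_neg]
  have hPne (m : ℕ) : poch (q ^ 4) m ≠ 0 := by
    unfold poch
    refine Finset.prod_ne_zero_iff.mpr fun i _ => ?_
    rw [sub_eq_add_neg]; exact one_sub_pow_ne _ hQ1 i
  have hPi : Tendsto (fun m => (poch (q ^ 4) m)⁻¹) atTop (𝓝 L⁻¹) := hP.inv₀ hne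
  obtain ⟨C, hC⟩ := (Metric.isBounded_range_of_tendsto _ hP).exists_norm_le
  obtain ⟨D, hD⟩ := (Metric.isBounded_range_of_tendsto _ hPi).exists_norm_le
  have hC' (m : ℕ) : ‖poch (q ^ 4) m‖ ≤ C := hC _ ⟨m, rfl⟩
  have hD' (m : ℕ) : ‖(poch (q ^ 4) m)⁻¹‖ ≤ D := hD _ ⟨m, rfl⟩
  have hC0 : 0 ≤ C := (norm_nonneg _).trans (hC' 0)
  have hD0 : 0 ≤ D := (norm_nonneg _).trans (hD' 0)
  have hform (m : ℕ) (n : ℤ) (a b : ℕ) (ha : (a : ℤ) = m + n) (hb : (b : ℤ) = m - n) :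
      gb (q ^ 4) (2 * m) (m + n)
        = poch (q ^ 4) (2 * m) * ((poch (q ^ 4) a)⁻¹ * (poch (q ^ 4) b)⁻¹) := by
    have := gb_formula (q ^ 4) (2 * m) a b (by omega)
    rw [← ha, ← this]
    field_simp [hPne a, hPne b]
  have hbound (m : ℕ) (n : ℤ) : ‖gb (q ^ 4) (2 * m) (m + n)‖ ≤ C * (D * D) := by
    by_cases h1 : (m : ℤ) + n < 0
    · rw [gb_neg _ _ _ h1, norm_zero]; positivity
    by_cases h2 : ((2 * m : ℕ) : ℤ) < m + n
    · rw [gb_gt _ _ _ h2, norm_zero]; positivity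
    push_cast at h2
    rw [hform m n ((m : ℤ) + n).toNat ((m : ℤ) - n).toNat (by omega) (by omega), norm_mul, norm_mul]
    gcongr
    · exact hC' _
    · exact hD' _
    · exact hD' _
  have hlim (n : ℤ) : Tendsto (fun m : ℕ => th q z n * gb (q ^ 4) (2 * m) (m + n)) atTop
      (𝓝 (th q z n * L⁻¹)) := by
    refine Tendsto.const_mul _ ?_
    have t0 : Tendsto (fun m : ℕ => 2 * m) atTop atTop :=
      tendsto_atTop_mono (fun m => by rw [id]; omega) tendsto_id
    have t1 : Tendsto (fun m : ℕ => ((m : ℤ) + n).toNat) atTop atTop := by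
      refine tendsto_atTop.mpr fun b => ?_
      filter_upwards [eventually_ge_atTop (b + n.natAbs)] with m hm
      omega
    have t2 : Tendsto (fun m : ℕ => ((m : ℤ) - n).toNat) atTop atTop := by
      refine tendsto_atTop.mpr fun b => ?_
      filter_upwards [eventually_ge_atTop (b + n.natAbs)] with m hm
      omega
    have := (hP.comp t0).mul ((hPi.comp t1).mul (hPi.comp t2))
    have hLL : L * (L⁻¹ * L⁻¹) = L⁻¹ := by field_simp
    rw [hLL] at this
    refine this.congr' ?_
    filter_upwards [eventually_ge_atTop n.natAbs] with m hm
    rw [hform m n ((m : ℤ) + n).toNat ((m : ℤ) - n).toNat (by omega) (by omega)]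
    rfl
  have T1 := tendsto_tsum_of_dominated_convergence (𝓕 := atTop)
    (f := fun (m : ℕ) (n : ℤ) => th q z n * gb (q ^ 4) (2 * m) (m + n))
    (hth.norm.mul_right (C * (D * D))) hlim
    (Eventually.of_forall fun m n => by
      rw [norm_mul]; exact mul_le_mul_of_nonneg_left (hbound m n) (norm_nonneg _))
  have T2 : Tendsto (fun m : ℕ => ∏ s ∈ Finset.range (2 * m), (1 + modeFactor q z s)) atTop
      (𝓝 (∑' S : Finset ℕ, ∏ s ∈ S, modeFactor q z s)) := by
    have t0 : Tendsto (fun m : ℕ => 2 * m) atTop atTop :=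
      tendsto_atTop_mono (fun m => by rw [id]; omega) tendsto_id
    exact (hasProd_one_add_of_hasSum_prod hsum.hasSum).tendsto_prod_nat.comp t0
  have T3 := tendsto_nhds_unique T2 (T1.congr fun m => (finite_jtp q z hq hz m).tsum_eq)
  rw [T3, tsum_mul_right, mul_assoc, inv_mul_cancel₀ hne, mul_one]
  rfl
end
end

section
/- Let q, z be complex numbers with 0 < |q| < 1 and z ≠ 0. Then ∏_{i=0}^{∞} (1 − q^{4i+4})(1 + z q^{4i+3})(1 + z^{−1} q^{4i+1}) = ∑_{m∈ℤ} z^m q^{m(2m+1)}, where the infinite product converges and the series on the right converges absolutely. (This is the Jacobi identity ∏_{i≥1}(1−q^{2i})(1+zq^{2i−1/2})(1+z^{−1}q^{2i−3/2}) = ∑_{m∈ℤ} z^m q^{m(2m+1)/2} obtained from the two graded dimension formulas for F^{⊗1/2}, with q replaced by q² to avoid half-integer exponents.) -/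
open Filter Topology

namespace JacobiAux

/-- The finite product `(p; p)_k`. -/
noncomputable def poch (p : ℂ) (k : ℕ) : ℂ := ∏ i ∈ Finset.range k, (1 - p ^ (i + 1))

/-- The reciprocal of `(p; p)_k`, extended by zero to negative `k`. -/
noncomputable def rinv (p : ℂ) (k : ℤ) : ℂ := if 0 ≤ k then (poch p k.toNat)⁻¹ else 0

/-- The general term of the theta series. -/
noncomputable def tt (q z : ℂ) (m : ℤ) : ℂ := z ^ m * q ^ (m * (2 * m + 1))

lemma one_sub_ne {p : ℂ} (hp : ‖p‖ < 1) (i : ℕ) : 1 - p ^ (i + 1) ≠ 0 := by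
  intro h
  have h1 : p ^ (i + 1) = 1 := (sub_eq_zero.mp h).symm
  have h2 : ‖p‖ ^ (i + 1) < 1 := pow_lt_one₀ (norm_nonneg _) hp (by omega)
  rw [← norm_pow, h1] at h2
  simp at h2

lemma poch_ne {p : ℂ} (hp : ‖p‖ < 1) (k : ℕ) : poch p k ≠ 0 :=
  Finset.prod_ne_zero_iff.mpr fun i _ => one_sub_ne hp i

lemma rinv_step {p : ℂ} (hp : ‖p‖ < 1) (k : ℤ) : rinv p (k - 1) = (1 - p ^ k) * rinv p k := by
  rcases lt_trichotomy k 0 with h | h | h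
  · simp [rinv, show ¬ (0 ≤ k) by omega, show ¬ (1 ≤ k) by omega]
  · subst h; simp [rinv]
  · obtain ⟨n, rfl⟩ : ∃ n : ℕ, k = (n : ℤ) + 1 := ⟨(k - 1).toNat, by omega⟩
    have h1 : ((n : ℤ) + 1).toNat = n + 1 := by omega
    have h3 := one_sub_ne hp n
    have h4 := poch_ne hp n
    have h5 : poch p (n + 1) = poch p n * (1 - p ^ (n + 1)) := Finset.prod_range_succ _ _
    have h6 : p ^ ((n : ℤ) + 1) = p ^ (n + 1) := by exact_mod_cast zpow_natCast p (n + 1)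
    simp only [rinv, add_sub_cancel_right, Int.natCast_nonneg, if_true, Int.toNat_natCast, h1,
      show (0 : ℤ) ≤ n + 1 by omega, h5, h6]
    field_simp

lemma summ {p : ℂ} (hp : ‖p‖ < 1) : Summable (fun i : ℕ => ‖-p ^ (i + 1)‖) := by
  simpa using (summable_nat_add_iff 1).mpr (summable_geometric_of_lt_one (norm_nonneg _) hp)

lemma poch_tendsto {p : ℂ} (hp : ‖p‖ < 1) : ∃ L : ℂ, L ≠ 0 ∧ Tendsto (poch p) atTop (𝓝 L) := by
  refine ⟨∏' i : ℕ, (1 + (-p ^ (i + 1))), ?_, ?_⟩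
  · refine tprod_one_add_ne_zero_of_summable (fun i => ?_) (summ hp)
    rw [← sub_eq_add_neg]; exact one_sub_ne hp i
  · have := (multipliable_one_add_of_summable (summ hp)).hasProd.tendsto_prod_nat
    refine this.congr fun n => ?_
    simp [poch, sub_eq_add_neg]

lemma tt_sub {q z : ℂ} (hq : q ≠ 0) (hz : z ≠ 0) (m : ℤ) (n : ℕ) :
    tt q z (m - 1) * (z * q ^ (4 * n + 3)) = tt q z m * (q ^ 4) ^ ((n : ℤ) + 1 - m) := by
  have e : q ^ (4 * n + 3) = q ^ (4 * (n : ℤ) + 3) := by exact_mod_cast (zpow_natCast q (4*n+3)).symm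
  have e2 : (q ^ 4) ^ ((n : ℤ) + 1 - m) = q ^ (4 * ((n : ℤ) + 1 - m)) := by
    rw [zpow_mul]; norm_cast
  have e3 : z ^ m = z ^ (m - 1) * z := by rw [← zpow_add_one₀ hz]; simp
  rw [tt, tt, e, e2, e3]
  have : q ^ ((m - 1) * (2 * (m - 1) + 1)) * q ^ (4 * (n : ℤ) + 3)
      = q ^ (m * (2 * m + 1)) * q ^ (4 * ((n : ℤ) + 1 - m)) := by
    rw [← zpow_add₀ hq, ← zpow_add₀ hq]; congr 1; ring
  linear_combination z ^ (m - 1) * z * this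

lemma tt_add {q z : ℂ} (hq : q ≠ 0) (hz : z ≠ 0) (m : ℤ) (n : ℕ) :
    tt q z (m + 1) * (z⁻¹ * q ^ (4 * n + 1)) = tt q z m * (q ^ 4) ^ ((n : ℤ) + 1 + m) := by
  have e : q ^ (4 * n + 1) = q ^ (4 * (n : ℤ) + 1) := by exact_mod_cast (zpow_natCast q (4*n+1)).symm
  have e2 : (q ^ 4) ^ ((n : ℤ) + 1 + m) = q ^ (4 * ((n : ℤ) + 1 + m)) := by
    rw [zpow_mul]; norm_cast
  have e3 : z ^ (m + 1) * z⁻¹ = z ^ m := by rw [zpow_add_one₀ hz]; field_simp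
  rw [tt, tt, e, e2, ← e3]
  have : q ^ ((m + 1) * (2 * (m + 1) + 1)) * q ^ (4 * (n : ℤ) + 1)
      = q ^ (m * (2 * m + 1)) * q ^ (4 * ((n : ℤ) + 1 + m)) := by
    rw [← zpow_add₀ hq, ← zpow_add₀ hq]; congr 1; ring
  linear_combination z ^ (m + 1) * z⁻¹ * this

/-- The Gaussian binomial coefficient, centred. -/
noncomputable def bb (p : ℂ) (n : ℕ) (m : ℤ) : ℂ := poch p (2 * n) * (rinv p (n + m) * rinv p (n - m))

lemma bb_succ {p : ℂ} (hp0 : p ≠ 0) (hp : ‖p‖ < 1) (n : ℕ) (m : ℤ) :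
    bb p (n + 1) m = bb p n m * (1 + p ^ (2 * n + 1)) + bb p n (m - 1) * p ^ ((n : ℤ) + 1 - m)
      + bb p n (m + 1) * p ^ ((n : ℤ) + 1 + m) := by
  set A : ℤ := (n : ℤ) + 1 + m with hA
  set B : ℤ := (n : ℤ) + 1 - m with hB
  have h5 : poch p (2 * (n + 1)) = poch p (2 * n) * (1 - p ^ (2 * n + 1)) * (1 - p ^ (2 * n + 2)) := by
    rw [poch, show 2 * (n + 1) = 2 * n + 1 + 1 by ring, Finset.prod_range_succ,
      Finset.prod_range_succ]; rfl
  have a1 := rinv_step hp A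
  have a2 := rinv_step hp (A - 1)
  have b1 := rinv_step hp B
  have b2 := rinv_step hp (B - 1)
  have hab : p ^ A * p ^ B = p * p ^ (2 * n + 1) := by
    rw [← zpow_add₀ hp0, ← pow_succ', ← zpow_natCast]; congr 1; push_cast; omega
  have hs : p ^ (2 * n + 2) = p * p ^ (2 * n + 1) := by rw [← pow_succ']
  have ha : p ^ (A - 1) = p ^ A / p := zpow_sub_one₀ hp0 A
  have hb : p ^ (B - 1) = p ^ B / p := zpow_sub_one₀ hp0 B
  have hS : p ^ (2 * n + 1) = p ^ A * p ^ B / p := by rw [hab]; field_simp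
  simp only [bb, h5, hs, Nat.cast_add, Nat.cast_one]
  rw [show (n : ℤ) + 1 + m = A from rfl, show (n : ℤ) + 1 - m = B from rfl,
    show (n : ℤ) + m = A - 1 by omega, show (n : ℤ) - m = B - 1 by omega,
    show (n : ℤ) + (m - 1) = A - 1 - 1 by omega, show (n : ℤ) - (m - 1) = B by omega,
    show (n : ℤ) + (m + 1) = A by omega, show (n : ℤ) - (m + 1) = B - 1 - 1 by omega,
    a2, b2, a1, b1, ha, hb, hS]
  field_simp
  ring

/-- The partial products without the `1 - q^{4i+4}` factors. -/
lemma finite_jacobi {q z : ℂ} (hq : q ≠ 0) (hq1 : ‖q ^ 4‖ < 1) (hz : z ≠ 0) (n : ℕ) :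
    HasSum (fun m : ℤ => bb (q ^ 4) n m * tt q z m)
      (∏ i ∈ Finset.range n, ((1 + z * q ^ (4 * i + 3)) * (1 + z⁻¹ * q ^ (4 * i + 1)))) := by
  induction n with
  | zero =>
    have h := hasSum_single (f := fun m : ℤ => bb (q ^ 4) 0 m * tt q z m) 0 (by
      intro m hm
      rcases lt_or_gt_of_ne hm with h | h
      · simp [bb, rinv, show ¬ (0 ≤ m) by omega]
      · simp [bb, rinv, show ¬ (m ≤ 0) by omega])
    simpa [bb, rinv, tt, poch] using h
  | succ n ih =>
    have h1 := ih.mul_right (1 + (q ^ 4) ^ (2 * n + 1))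
    have h2 := ((Equiv.subRight (1 : ℤ)).hasSum_iff.mpr ih).mul_right (z * q ^ (4 * n + 3))
    have h3 := ((Equiv.addRight (1 : ℤ)).hasSum_iff.mpr ih).mul_right (z⁻¹ * q ^ (4 * n + 1))
    have h := (h1.add h2).add h3
    rw [Finset.prod_range_succ]
    refine (congrArg₂ (fun f a => HasSum (f : ℤ → ℂ) (a : ℂ)) ?_ ?_).mpr h
    · funext m
      simp only [Function.comp, Equiv.subRight_apply, Equiv.coe_addRight]
      rw [mul_assoc (bb _ n (m - 1)), mul_assoc (bb _ n (m + 1)), tt_sub hq hz, tt_add hq hz,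
        bb_succ (pow_ne_zero 4 hq) hq1]
      ring
    · have : (z * q ^ (4 * n + 3)) * (z⁻¹ * q ^ (4 * n + 1)) = (q ^ 4) ^ (2 * n + 1) := by
        rw [← pow_mul]
        field_simp
        rw [← pow_add]; congr 1; ring
      rw [← this]; ring

lemma tt_ne {q z : ℂ} (hq : q ≠ 0) (hz : z ≠ 0) (m : ℤ) : tt q z m ≠ 0 :=
  mul_ne_zero (zpow_ne_zero _ hz) (zpow_ne_zero _ hq)

lemma tt_summable {q z : ℂ} (hq : q ≠ 0) (hq1 : ‖q‖ < 1) (hz : z ≠ 0) :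
    Summable (fun m : ℤ => ‖tt q z m‖) := by
  have key : ∀ (w : ℂ) (c : ℕ), Tendsto (fun n : ℕ => ‖w * q ^ (4 * n + c)‖) atTop (𝓝 0) := by
    intro w c
    have h1 : Tendsto (fun n : ℕ => q ^ (4 * n + c)) atTop (𝓝 0) :=
      (tendsto_pow_atTop_nhds_zero_of_norm_lt_one hq1).comp
        (tendsto_atTop_mono (fun n => by simp only [id]; omega) tendsto_id)
    simpa using (h1.const_mul w).norm
  refine Summable.of_nat_of_neg ?_ ?_
  · refine summable_of_ratio_test_tendsto_lt_one (l := 0) one_pos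
      (Eventually.of_forall fun n => norm_ne_zero_iff.mpr (tt_ne hq hz _)) ?_
    refine (key z 3).congr fun n => ?_
    rw [norm_norm, norm_norm, ← norm_div]
    congr 1
    rw [eq_div_iff (tt_ne hq hz _)]
    have := tt_sub hq hz ((n : ℤ) + 1) n
    simp only [add_sub_cancel_right, sub_self, zpow_zero, mul_one] at this
    push_cast
    rw [← this]; ring
  · refine summable_of_ratio_test_tendsto_lt_one (l := 0) one_pos
      (Eventually.of_forall fun n => norm_ne_zero_iff.mpr (tt_ne hq hz _)) ?_
    refine (key z⁻¹ 1).congr fun n => ?_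
    rw [norm_norm, norm_norm, ← norm_div]
    congr 1
    rw [eq_div_iff (tt_ne hq hz _)]
    have := tt_add hq hz (-((n : ℤ) + 1)) n
    rw [show -((n : ℤ) + 1) + 1 = -n by ring,
      show (n : ℤ) + 1 + -((n : ℤ) + 1) = 0 by ring, zpow_zero, mul_one] at this
    push_cast
    rw [← this]; ring

lemma rinv_bounded {p : ℂ} (hp : ‖p‖ < 1) : ∃ C : ℝ, 0 ≤ C ∧ ∀ k : ℤ, ‖rinv p k‖ ≤ C := by
  obtain ⟨L, hL, h⟩ := poch_tendsto hp
  obtain ⟨C, hC⟩ := (Metric.isBounded_range_of_tendsto _ (h.inv₀ hL)).exists_norm_le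
  have hC' : ∀ k : ℕ, ‖(poch p k)⁻¹‖ ≤ C := fun k => hC _ ⟨k, rfl⟩
  have h0 : 0 ≤ C := (norm_nonneg _).trans (hC' 0)
  refine ⟨C, h0, fun k => ?_⟩
  rw [rinv]
  split_ifs
  · exact hC' _
  · simpa using h0

lemma poch_bounded {p : ℂ} (hp : ‖p‖ < 1) : ∃ C : ℝ, 0 ≤ C ∧ ∀ k : ℕ, ‖poch p k‖ ≤ C := by
  obtain ⟨L, hL, h⟩ := poch_tendsto hp
  obtain ⟨C, hC⟩ := (Metric.isBounded_range_of_tendsto _ h).exists_norm_le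
  have hC' : ∀ k : ℕ, ‖poch p k‖ ≤ C := fun k => hC _ ⟨k, rfl⟩
  exact ⟨C, (norm_nonneg _).trans (hC' 0), hC'⟩

lemma rinv_tendsto {p L : ℂ} (hL : L ≠ 0) (h : Tendsto (poch p) atTop (𝓝 L)) (m : ℤ) :
    Tendsto (fun n : ℕ => rinv p (n + m)) atTop (𝓝 L⁻¹) := by
  have h1 : Tendsto (fun n : ℕ => ((n : ℤ) + m).toNat) atTop atTop := by
    refine tendsto_atTop.mpr fun b => ?_
    filter_upwards [eventually_ge_atTop (b + m.natAbs)] with n hn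
    omega
  refine ((h.inv₀ hL).comp h1).congr' ?_
  filter_upwards [eventually_ge_atTop m.natAbs] with n hn
  simp [rinv, show (0 : ℤ) ≤ n + m by omega]

lemma limit {q z : ℂ} (hq : q ≠ 0) (hq1 : ‖q‖ < 1) (hz : z ≠ 0) :
    Tendsto (fun n : ℕ => ∏ i ∈ Finset.range n, ((1 - q ^ (4 * i + 4)) * (1 + z * q ^ (4 * i + 3)) *
      (1 + z⁻¹ * q ^ (4 * i + 1)))) atTop (𝓝 (∑' m : ℤ, tt q z m)) := by
  have hp : ‖q ^ 4‖ < 1 := by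
    rw [norm_pow]; exact pow_lt_one₀ (norm_nonneg _) hq1 (by norm_num)
  obtain ⟨L, hL, h⟩ := poch_tendsto hp
  obtain ⟨C, hC0, hC⟩ := rinv_bounded hp
  obtain ⟨D, hD0, hD⟩ := poch_bounded hp
  have main : Tendsto (fun n : ℕ => ∑' m : ℤ, poch (q ^ 4) n * (bb (q ^ 4) n m * tt q z m)) atTop
      (𝓝 (∑' m : ℤ, tt q z m)) := by
    refine tendsto_tsum_of_dominated_convergence
      (bound := fun m => D * (D * (C * C) * ‖tt q z m‖))
      (((tt_summable hq hq1 hz).mul_left _).mul_left _) ?_ ?_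
    · intro m
      have h2 : Tendsto (fun n : ℕ => poch (q ^ 4) (2 * n)) atTop (𝓝 L) :=
        h.comp (tendsto_atTop_mono (fun n => by simp only [id]; omega) tendsto_id)
      have h3 := rinv_tendsto hL h m
      have h4 := rinv_tendsto hL h (-m)
      have h5 := h.mul ((h2.mul (h3.mul h4)).mul_const (tt q z m))
      have e : L * (L * (L⁻¹ * L⁻¹) * tt q z m) = tt q z m := by field_simp
      rw [e] at h5
      exact h5
    · refine Eventually.of_forall fun n m => ?_
      simp only [bb, norm_mul]
      gcongr <;> first | apply hD | apply hC
  refine main.congr fun n => ?_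
  rw [((finite_jacobi hq hp hz n).mul_left _).tsum_eq, poch, ← Finset.prod_mul_distrib]
  refine Finset.prod_congr rfl fun i _ => ?_
  rw [← pow_mul, mul_assoc, show 4 * (i + 1) = 4 * i + 4 by ring]

lemma mult {q : ℂ} (hq1 : ‖q‖ < 1) (w : ℂ) (c : ℕ) :
    Multipliable (fun i : ℕ => 1 + w * q ^ (4 * i + c)) := by
  refine multipliable_one_add_of_summable ?_
  have h : Summable (fun i : ℕ => ‖w‖ * ‖q‖ ^ i) :=
    (summable_geometric_of_lt_one (norm_nonneg _) hq1).mul_left _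
  refine Summable.of_nonneg_of_le (fun _ => norm_nonneg _) (fun i => ?_) h
  rw [norm_mul, norm_pow]
  gcongr ?_ * ?_
  exact pow_le_pow_of_le_one (norm_nonneg _) hq1.le (by omega)

end JacobiAux


/-- The Jacobi identity obtained from the two graded dimension formulas for `F^{⊗1/2}`
(with `q` replaced by `q²` to avoid half-integer exponents): for `0 < |q| < 1`, `z ≠ 0`,
`∏_{i=0}^∞ (1 − q^{4i+4})(1 + z q^{4i+3})(1 + z⁻¹ q^{4i+1}) = ∑_{m∈ℤ} z^m q^{m(2m+1)}`,
with the infinite product convergent and the series absolutely convergent. -/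
theorem jacobi_identity (q z : ℂ) (hq0 : 0 < ‖q‖) (hq1 : ‖q‖ < 1) (hz : z ≠ 0) :
    Multipliable
      (fun i : ℕ => (1 - q ^ (4 * i + 4)) * (1 + z * q ^ (4 * i + 3)) *
        (1 + z⁻¹ * q ^ (4 * i + 1))) ∧
    Summable (fun m : ℤ => ‖z ^ m * q ^ (m * (2 * m + 1))‖) ∧
    ∏' i : ℕ, (1 - q ^ (4 * i + 4)) * (1 + z * q ^ (4 * i + 3)) * (1 + z⁻¹ * q ^ (4 * i + 1))
      = ∑' m : ℤ, z ^ m * q ^ (m * (2 * m + 1)) := by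
  have hq : q ≠ 0 := norm_pos_iff.mp hq0
  have hm : Multipliable
      (fun i : ℕ => (1 - q ^ (4 * i + 4)) * (1 + z * q ^ (4 * i + 3)) *
        (1 + z⁻¹ * q ^ (4 * i + 1))) := by
    have h1 := JacobiAux.mult hq1 (-1) 4
    simp only [neg_one_mul, ← sub_eq_add_neg] at h1
    exact (h1.mul (JacobiAux.mult hq1 z 3)).mul (JacobiAux.mult hq1 z⁻¹ 1)
  exact ⟨hm, JacobiAux.tt_summable hq hq1 hz,
    tendsto_nhds_unique hm.hasProd.tendsto_prod_nat (JacobiAux.limit hq hq1 hz)⟩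
end

section
/- Let V be a complex vector space, let (L_n)_{n∈ℤ} be operators on V satisfying the Virasoro relations with central charge c ∈ ℂ, and let N be a positive integer. Then the operators L'_n := (1/N) L_{Nn} + ((N²−1)/(24N)) · c · δ_{n,0} · id_V satisfy the Virasoro relations with central charge N·c. -/
/-- Operators `(T_n)_{n∈ℤ}` on a complex vector space `V` satisfy the Virasoro relations
with central charge `c ∈ ℂ` if
`T_m T_n − T_n T_m = (m−n) T_{m+n} + δ_{m,−n} ((m³−m)/12) c · id_V` for all `m, n`. -/
def VirasoroRel {V : Type*} [AddCommGroup V] [Module ℂ V]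
    (T : ℤ → Module.End ℂ V) (c : ℂ) : Prop :=
  ∀ m n : ℤ, T m * T n - T n * T m
    = ((m - n : ℤ) : ℂ) • T (m + n)
      + (if m = -n then ((m ^ 3 - m : ℤ) : ℂ) / 12 * c else 0) • (1 : Module.End ℂ V)

/-- "Half the modes, N-tuple the charge": if `(L_n)_{n∈ℤ}` satisfy the Virasoro relations
with central charge `c` and `N ≥ 1`, then the operators
`L'_n := (1/N) L_{Nn} + ((N²−1)/(24N)) c δ_{n,0} id_V` satisfy the Virasoro relations with
central charge `N·c`. -/
theorem virasoro_rescaled_modes {V : Type*} [AddCommGroup V] [Module ℂ V]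
    (L : ℤ → Module.End ℂ V) (c : ℂ) (N : ℕ) (hN : 0 < N) (hL : VirasoroRel L c) :
    VirasoroRel
      (fun n => ((N : ℂ))⁻¹ • L ((N : ℤ) * n)
        + (if n = 0 then ((N : ℂ) ^ 2 - 1) / (24 * (N : ℂ)) * c else 0) • (1 : Module.End ℂ V))
      ((N : ℂ) * c) := by
  have hN0 : (N : ℂ) ≠ 0 := by exact_mod_cast hN.ne'
  have hNz : (N : ℤ) ≠ 0 := by exact_mod_cast hN.ne'
  intro m n
  have h := hL ((N : ℤ) * m) ((N : ℤ) * n)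
  have key : ∀ (A B : Module.End ℂ V) (a x y : ℂ),
      (a • A + x • (1 : Module.End ℂ V)) * (a • B + y • (1 : Module.End ℂ V))
        - (a • B + y • (1 : Module.End ℂ V)) * (a • A + x • (1 : Module.End ℂ V))
      = (a * a) • (A * B - B * A) := by
    intro A B a x y
    simp only [add_mul, mul_add, smul_mul_assoc, mul_smul_comm, mul_one, one_mul]
    module
  beta_reduce
  rw [key, h, ← mul_add]
  by_cases hmn : m = -n
  · subst hmn
    have e1 : (N : ℤ) * -n = -((N : ℤ) * n) := by ring
    have e2 : -n + n = 0 := by ring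
    rw [if_pos e1, if_pos e2, if_pos rfl]
    match_scalars
    · push_cast
      field_simp
    · push_cast
      field_simp
      ring
  · have h1 : ¬ ((N : ℤ) * m = -((N : ℤ) * n)) := by
      intro h2
      apply hmn
      apply mul_left_cancel₀ hNz
      rw [h2]; ring
    have h3 : ¬ (m + n = 0) := fun h2 => hmn (by omega)
    rw [if_neg h1, if_neg h3, if_neg hmn]
    match_scalars
    · push_cast
      field_simp
    · simp
end
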